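/- The average optimal complementary coverage probability is nonincreasing in the sample size: for every integer t ≥ 0, Σ_{s=0}^{t+1} C(t+1,s)·m_{t+1}(s)·𝒞_{t+1}(s) ≤ Σ_{s=0}^{t} C(t,s)·m_t(s)·𝒞_t(s), where C(n,k) denotes the binomial coefficient. -/

import Mathlib

/-!
Multiplied by the marginal likelihood, the optimal complementary coverage becomes the total mass of
the unnormalised posterior minus the largest mass of a covering window. One further trial splits
the unnormalised posterior after `t` trials into those for its two outcomes. A window chosen before
that trial covers no more than windows chosen separately for each outcome, because the supremum of
a sum is at most the sum of the suprema. Pascal's rule turns this comparison into the one between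
the binomial averages.
-/

open MeasureTheory Set


/-- `m_t(s) = ∫_0^1 θ^s (1-θ)^(t-s) π(θ) dθ`. -/
noncomputable def margLik (π : ℝ → ℝ) (t s : ℕ) : ℝ :=
  ∫ θ in Ioc (0:ℝ) 1, θ ^ s * (1 - θ) ^ (t - s) * π θ

/-- Posterior density `π_t(θ|s)`. -/
noncomputable def postDens (π : ℝ → ℝ) (t s : ℕ) (θ : ℝ) : ℝ :=
  θ ^ s * (1 - θ) ^ (t - s) * π θ / margLik π t s

/-- Posterior coverage of the interval `[a-h, a+h]` cropped to `[0,1]`. -/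
noncomputable def covFn (h : ℝ) (π : ℝ → ℝ) (t s : ℕ) (a : ℝ) : ℝ :=
  ∫ θ in Ioc (max (a - h) 0) (min (a + h) 1), postDens π t s θ

/-- Optimal conditional complementary coverage probability `𝒞_t(s)`. -/
noncomputable def Copt (h : ℝ) (π : ℝ → ℝ) (t s : ℕ) : ℝ :=
  1 - sSup (covFn h π t s '' Icc 0 1)

/-- Predictive probability `g_{t+1}(s) = m_{t+1}(s+1)/m_t(s)`. -/
noncomputable def gpred (π : ℝ → ℝ) (t s : ℕ) : ℝ :=
  margLik π (t + 1) (s + 1) / margLik π t s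

/-- Auxiliary backward recursion: `Vaux k s = V_{N-k}(s)`. -/
noncomputable def Vaux (h : ℝ) (π : ℝ → ℝ) (c : ℝ) (N : ℕ) : ℕ → ℕ → ℝ
  | 0, s => Copt h π N s
  | k + 1, s =>
      min (Copt h π (N - (k + 1)) s)
        (c + gpred π (N - (k + 1)) s * Vaux h π c N k (s + 1)
           + (1 - gpred π (N - (k + 1)) s) * Vaux h π c N k s)

/-- Optimal residual cost `V_t(s)` for horizon `N` and sampling cost `c`. -/
noncomputable def Vopt (h : ℝ) (π : ℝ → ℝ) (c : ℝ) (N t s : ℕ) : ℝ :=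
  Vaux h π c N (N - t) s

lemma sum_choose_succ_mul_le_of_add_le {R : Type*} [Semiring R] [PartialOrder R]
    [IsOrderedRing R] {f g : ℕ → R} {n : ℕ} (hfg : ∀ k ≤ n, g k + g (k + 1) ≤ f k) :
    ∑ k ∈ Finset.range (n + 2), ((n + 1).choose k : R) * g k
      ≤ ∑ k ∈ Finset.range (n + 1), (n.choose k : R) * f k := by
  calc ∑ k ∈ Finset.range (n + 2), ((n + 1).choose k : R) * g k
      = ∑ k ∈ Finset.range (n + 1), (n.choose k : R) * (g k + g (k + 1)) := by
        rw [Finset.sum_choose_succ_mul (fun k _ => g k), ← Finset.sum_add_distrib]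
        simp only [mul_add]
    _ ≤ ∑ k ∈ Finset.range (n + 1), (n.choose k : R) * f k :=
        Finset.sum_le_sum fun k hk =>
          mul_le_mul_of_nonneg_left (hfg k (Finset.mem_range_succ_iff.1 hk)) (Nat.cast_nonneg _)

section MissedMass

variable {α ι : Type*} [MeasurableSpace α] {μ : Measure α} {f g : α → ℝ}

lemma bddAbove_range_setIntegral (hf : Integrable f μ) (A : ι → Set α) :
    BddAbove (range fun i => ∫ x in A i, f x ∂μ) := by
  refine ⟨∫ x, ‖f x‖ ∂μ, ?_⟩
  rintro _ ⟨i, rfl⟩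
  calc ∫ x in A i, f x ∂μ
      ≤ ‖∫ x in A i, f x ∂μ‖ := Real.le_norm_self _
    _ ≤ ∫ x in A i, ‖f x‖ ∂μ := norm_integral_le_integral_norm _
    _ ≤ ∫ x, ‖f x‖ ∂μ := setIntegral_le_integral hf.norm (.of_forall fun x => norm_nonneg (f x))

lemma iSup_setIntegral_add_le [Nonempty ι] (hf : Integrable f μ) (hg : Integrable g μ)
    (A : ι → Set α) :
    ⨆ i, ∫ x in A i, (f + g) x ∂μ ≤ (⨆ i, ∫ x in A i, f x ∂μ) + ⨆ i, ∫ x in A i, g x ∂μ := by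
  refine ciSup_le fun i => ?_
  rw [integral_add' hf.integrableOn hg.integrableOn]
  exact add_le_add (le_ciSup (bddAbove_range_setIntegral hf A) i)
    (le_ciSup (bddAbove_range_setIntegral hg A) i)

/-- The least mass, under the density `f` with respect to `μ`, that a set of the family `A` leaves
uncovered. It is written as total mass minus largest covered mass, rather than as an infimum over
complements, so that the sets need not be measurable. -/
noncomputable def leastMissedMass (μ : Measure α) (A : ι → Set α) (f : α → ℝ) : ℝ :=
  ∫ x, f x ∂μ - ⨆ i, ∫ x in A i, f x ∂μ

lemma leastMissedMass_add_le [Nonempty ι] (hf : Integrable f μ) (hg : Integrable g μ)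
    (A : ι → Set α) :
    leastMissedMass μ A f + leastMissedMass μ A g ≤ leastMissedMass μ A (f + g) := by
  have hsup := iSup_setIntegral_add_le hf hg A
  unfold leastMissedMass
  rw [integral_add' hf hg]
  linarith

end MissedMass

section JointWeight

variable {α ι : Type*}

/-- The unnormalised posterior after `s` successes in `t` Bernoulli trials, for prior weight `π`
and success probability `p x` at the parameter `x`. -/
def jointWeight (p π : α → ℝ) (t s : ℕ) (x : α) : ℝ :=
  p x ^ s * (1 - p x) ^ (t - s) * π x

lemma jointWeight_eq_add_succ (p π : α → ℝ) {t s : ℕ} (hs : s ≤ t) :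
    jointWeight p π t s = jointWeight p π (t + 1) s + jointWeight p π (t + 1) (s + 1) := by
  funext x
  simp only [jointWeight, Pi.add_apply, Nat.succ_sub hs, Nat.add_sub_add_right, pow_succ]
  ring

variable [MeasurableSpace α] {μ : Measure α} {p π : α → ℝ}

lemma integrable_jointWeight (hp : AEStronglyMeasurable p μ) (hp01 : ∀ᵐ x ∂μ, p x ∈ Icc 0 1)
    (hπ : Integrable π μ) (t s : ℕ) : Integrable (jointWeight p π t s) μ := by
  refine hπ.bdd_mul (c := 1) ((hp.pow s).mul ((aestronglyMeasurable_const.sub hp).pow (t - s))) ?_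
  filter_upwards [hp01] with x ⟨hx0, hx1⟩
  have hq0 : 0 ≤ 1 - p x := sub_nonneg.2 hx1
  have hq1 : 1 - p x ≤ 1 := sub_le_self 1 hx0
  calc ‖p x ^ s * (1 - p x) ^ (t - s)‖
      = p x ^ s * (1 - p x) ^ (t - s) := Real.norm_of_nonneg (by positivity)
    _ ≤ 1 := mul_le_one₀ (pow_le_one₀ hx0 hx1) (by positivity) (pow_le_one₀ hq0 hq1)

theorem avg_Copt_nonincreasing_general [Nonempty ι] (hp : AEStronglyMeasurable p μ)
    (hp01 : ∀ᵐ x ∂μ, p x ∈ Icc 0 1) (hπ : Integrable π μ) (A : ι → Set α) (t : ℕ) :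
    ∑ s ∈ Finset.range (t + 2),
        ((t + 1).choose s : ℝ) * leastMissedMass μ A (jointWeight p π (t + 1) s)
      ≤ ∑ s ∈ Finset.range (t + 1),
          (t.choose s : ℝ) * leastMissedMass μ A (jointWeight p π t s) := by
  refine sum_choose_succ_mul_le_of_add_le fun s hs => ?_
  rw [jointWeight_eq_add_succ p π hs]
  exact leastMissedMass_add_le (integrable_jointWeight hp hp01 hπ _ _)
    (integrable_jointWeight hp hp01 hπ _ _) A

end JointWeight

section CoverWindow

/-- The interval `[a - h, a + h]` cropped to `[0, 1]`, half-open as in `covFn`. -/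
def coverWindow (h : ℝ) (a : Icc (0 : ℝ) 1) : Set ℝ :=
  Ioc (max (a - h) 0) (min (a + h) 1)

lemma coverWindow_subset_Ioc (h : ℝ) (a : Icc (0 : ℝ) 1) : coverWindow h a ⊆ Ioc 0 1 :=
  Ioc_subset_Ioc (le_max_right _ _) (min_le_right _ _)

variable {π : ℝ → ℝ} {t s : ℕ}

lemma margLik_mul_covFn (h : ℝ) (hm : margLik π t s ≠ 0) (a : Icc (0 : ℝ) 1) :
    margLik π t s * covFn h π t s a =
      ∫ θ in coverWindow h a, jointWeight id π t s θ ∂volume.restrict (Ioc 0 1) := by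
  rw [Measure.restrict_restrict_of_subset (coverWindow_subset_Ioc h a)]
  unfold covFn postDens
  rw [integral_div, mul_div_cancel₀ _ hm]
  rfl

lemma margLik_mul_Copt (h : ℝ) (hm : 0 < margLik π t s) :
    margLik π t s * Copt h π t s =
      leastMissedMass (volume.restrict (Ioc 0 1)) (coverWindow h) (jointWeight id π t s) := by
  rw [Copt, sSup_image', mul_sub, mul_one, Real.mul_iSup_of_nonneg hm.le]
  simp only [margLik_mul_covFn h hm.ne']
  rfl

end CoverWindow

/-- the average optimal complementary coverage probability is
nonincreasing in the sample size. -/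
theorem avg_Copt_nonincreasing (h : ℝ) (hh : 0 < h ∧ h < 1 / 2)
    (π : ℝ → ℝ) (hπ0 : ∀ θ, 0 ≤ π θ) (hπ1 : (∫ θ in (0:ℝ)..1, π θ) = 1)
    (hm : ∀ t s : ℕ, 0 < margLik π t s) :
    ∀ t : ℕ,
      ∑ s ∈ Finset.range (t + 2),
          ((t + 1).choose s : ℝ) * margLik π (t + 1) s * Copt h π (t + 1) s
        ≤ ∑ s ∈ Finset.range (t + 1),
            (t.choose s : ℝ) * margLik π t s * Copt h π t s := by
  intro t
  have hπ : IntegrableOn π (Ioc 0 1) :=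
    (intervalIntegral.intervalIntegrable_of_integral_ne_zero (hπ1.trans_ne one_ne_zero)).1
  have hmem : ∀ᵐ θ ∂volume.restrict (Ioc (0 : ℝ) 1), id θ ∈ Icc (0 : ℝ) 1 :=
    ae_restrict_of_forall_mem measurableSet_Ioc fun _ hθ => Ioc_subset_Icc_self hθ
  simpa only [mul_assoc, margLik_mul_Copt h (hm _ _)] using
    avg_Copt_nonincreasing_general aestronglyMeasurable_id hmem hπ (coverWindow h) t
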